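/- arXiv:1507.03329 — 2 statements merged into one kernel-verified Lean document; each statement's English description precedes it below -/
import Mathlib

section
/- Let 𝒞 be an idempotent complete additive category, and let ℰ be a collection of objects of 𝒞 that is closed under isomorphisms, closed under finite coproducts, and closed under taking summands (i.e., whenever X is an object of 𝒞 such that id_X factors through an object of ℰ, then X belongs to ℰ). Then for objects X and Y of 𝒞, the following are equivalent: (i) there exist morphisms f : X → Y and g : Y → X such that id_X − g∘f factors through an object of ℰ and id_Y − f∘g factors through an object of ℰ (i.e., X and Y become isomorphic in the quotient of 𝒞 by the morphisms factoring through objects of ℰ); (ii) there exist objects E_X and E_Y in ℰ such that X ⊕ E_X ≅ Y ⊕ E_Y in 𝒞. -/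
open CategoryTheory CategoryTheory.Limits

universe v u

/-- A morphism factors through an object belonging to the collection `E`. -/
def FactorsThruSet {C : Type u} [Category.{v} C] (E : Set C) {X Y : C} (φ : X ⟶ Y) : Prop :=
  ∃ Z ∈ E, ∃ (u : X ⟶ Z) (v : Z ⟶ Y), u ≫ v = φ

attribute [local instance] CategoryTheory.Limits.hasBinaryBiproducts_of_finite_biproducts

/-- In an idempotent complete additive category `C`, if a collection of objects `E` is
closed under isomorphisms, finite coproducts and summands, then two objects `X`, `Y`
become isomorphic in the quotient of `C` by the morphisms factoring through objects of
`E` if and only if `X ⊕ E_X ≅ Y ⊕ E_Y` for some `E_X, E_Y ∈ E`. -/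
theorem iso_in_quotient_iff_biprod_iso
    {C : Type u} [Category.{v} C] [Preadditive C] [HasFiniteBiproducts C]
    [IsIdempotentComplete C] (E : Set C)
    (hiso : ∀ X Y : C, X ∈ E → Nonempty (X ≅ Y) → Y ∈ E)
    (hzero : ∀ Z : C, IsZero Z → Z ∈ E)
    (hcoprod : ∀ X Y : C, X ∈ E → Y ∈ E → (X ⊞ Y) ∈ E)
    (hsummand : ∀ X : C, FactorsThruSet E (𝟙 X) → X ∈ E)
    (X Y : C) :
    (∃ (f : X ⟶ Y) (g : Y ⟶ X),
        FactorsThruSet E (𝟙 X - f ≫ g) ∧ FactorsThruSet E (𝟙 Y - g ≫ f)) ↔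
      ∃ EX ∈ E, ∃ EY ∈ E, Nonempty ((X ⊞ EX) ≅ (Y ⊞ EY)) := by
  constructor
  · rintro ⟨f, g, ⟨Z, hZ, u, v, huv⟩, ⟨Z', hZ', s, t, hst⟩⟩
    let a : X ⟶ Y ⊞ Z := biprod.lift f u
    let b : Y ⊞ Z ⟶ X := biprod.desc g v
    have hab : a ≫ b = 𝟙 X := by
      simp [a, b, biprod.lift_desc, huv]
    have hid : (𝟙 (Y ⊞ Z) - b ≫ a) ≫ (𝟙 (Y ⊞ Z) - b ≫ a) = 𝟙 (Y ⊞ Z) - b ≫ a := by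
      simp [Preadditive.sub_comp, Preadditive.comp_sub, reassoc_of% hab]
    obtain ⟨W, i, p, hip, hpi⟩ := IsIdempotentComplete.idempotents_split _ _ hid
    have hap : a ≫ p = 0 := by
      have h1 : a ≫ p ≫ i = 0 := by
        rw [hpi, Preadditive.comp_sub, reassoc_of% hab]; simp
      have h2 : (a ≫ p ≫ i) ≫ p = a ≫ p := by simp [hip]
      rw [← h2, h1, zero_comp]
    have hib : i ≫ b = 0 := by
      have h1 : p ≫ i ≫ b = 0 := by
        rw [reassoc_of% hpi, Preadditive.sub_comp, Category.assoc, hab]; simp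
      have h2 : i ≫ (p ≫ i ≫ b) = i ≫ b := by simp [reassoc_of% hip]
      rw [← h2, h1, comp_zero]
    have hW : W ∈ E := by
      refine hsummand W ⟨Z' ⊞ (Z ⊞ Z), hcoprod _ _ hZ' (hcoprod _ _ hZ hZ),
        biprod.lift (i ≫ biprod.fst ≫ s)
          (biprod.lift (i ≫ biprod.snd) (-(i ≫ biprod.fst ≫ g ≫ u))),
        biprod.desc (t ≫ biprod.inl ≫ p)
          (biprod.desc ((biprod.inr - v ≫ a) ≫ p) (biprod.inr ≫ p)), ?_⟩
      have ha : a = f ≫ biprod.inl + u ≫ biprod.inr := by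
        apply biprod.hom_ext <;> simp [a]
      have h1 : f ≫ biprod.inl ≫ p + u ≫ biprod.inr ≫ p = 0 := by
        rw [← hap, ha]; simp
      have h2 : u ≫ biprod.inr ≫ p = - (f ≫ biprod.inl ≫ p) :=
        eq_neg_of_add_eq_zero_right h1
      have h3 : i ≫ biprod.fst ≫ biprod.inl ≫ p + i ≫ biprod.snd ≫ biprod.inr ≫ p = 𝟙 W := by
        have h := congrArg (fun q => i ≫ q ≫ p) (biprod.total (X := Y) (Y := Z))
        simpa [hip, -biprod.total, Preadditive.add_comp, Preadditive.comp_add] using h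
      have hst' : s ≫ t ≫ biprod.inl ≫ p = biprod.inl ≫ p - g ≫ f ≫ biprod.inl ≫ p := by
        rw [reassoc_of% hst]; simp [Preadditive.sub_comp]
      rw [← h3]
      simp [biprod.lift_desc, Preadditive.sub_comp, Preadditive.comp_sub, hap, h2, hst']
    refine ⟨W, hW, Z, hZ, ⟨⟨biprod.desc a i, biprod.lift b p, ?_, ?_⟩⟩⟩
    · apply biprod.hom_ext <;> apply biprod.hom_ext' <;> simp [hab, hap, hib, hip]
    · simp [biprod.lift_desc, hpi]
  · rintro ⟨EX, hX, EY, hY, ⟨e⟩⟩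
    have key : ∀ {A B A' B' : C} (e : A ⊞ B ≅ A' ⊞ B'),
        (biprod.inl ≫ e.hom ≫ biprod.snd) ≫ (biprod.inr ≫ e.inv ≫ biprod.fst) =
        𝟙 A - (biprod.inl ≫ e.hom ≫ biprod.fst) ≫ (biprod.inl ≫ e.inv ≫ biprod.fst) := by
      intro A B A' B' e
      have h := congrArg (fun q => biprod.inl ≫ e.hom ≫ q ≫ e.inv ≫ biprod.fst)
        (biprod.total (X := A') (Y := B'))
      rw [eq_sub_iff_add_eq']
      simpa [-biprod.total, Preadditive.add_comp, Preadditive.comp_add] using h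
    exact ⟨biprod.inl ≫ e.hom ≫ biprod.fst, biprod.inl ≫ e.inv ≫ biprod.fst,
      ⟨EY, hY, _, _, key e⟩, ⟨EX, hX, _, _, key e.symm⟩⟩
end

section
/- Let k be a field, let Q and Q′ be commutative k-algebras, and let f ∈ Q, f′ ∈ Q′. Let P = (P₁, P₀, d₁, d₀) be a matrix factorization of f over Q and P′ = (P₁′, P₀′, d₁′, d₀′) a matrix factorization of f′ over Q′. Then the pair of Q ⊗_k Q′-modules ((P₁ ⊗_k P₀′) ⊕ (P₀ ⊗_k P₁′), (P₀ ⊗_k P₀′) ⊕ (P₁ ⊗_k P₁′)), equipped with the maps given in block form by D₁ = [[d₁ ⊗ id_{P₀′}, id_{P₀} ⊗ d₁′], [−id_{P₁} ⊗ d₀′, d₀ ⊗ id_{P₁′}]] from the first module to the second, and D₀ = [[d₀ ⊗ id_{P₀′}, −id_{P₁} ⊗ d₁′], [id_{P₀} ⊗ d₀′, d₁ ⊗ id_{P₁′}]] from the second module to the first, is a matrix factorization of f ⊗ 1 + 1 ⊗ f′ over Q ⊗_k Q′; in particular, both modules are finitely generated projective over Q ⊗_k Q′ and D₁∘D₀ =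 (f ⊗ 1 + 1 ⊗ f′)·id and D₀∘D₁ = (f ⊗ 1 + 1 ⊗ f′)·id. -/
open TensorProduct

universe u

section

variable (k : Type u) [Field k]
variable (Q : Type u) [CommRing Q] [Algebra k Q] (Q' : Type u) [CommRing Q'] [Algebra k Q']
variable (P1 P0 : Type u) [AddCommGroup P1] [AddCommGroup P0]
  [Module k P1] [Module k P0] [Module Q P1] [Module Q P0]
  [IsScalarTower k Q P1] [IsScalarTower k Q P0]
variable (P1' P0' : Type u) [AddCommGroup P1'] [AddCommGroup P0']
  [Module k P1'] [Module k P0'] [Module Q' P1'] [Module Q' P0']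
  [IsScalarTower k Q' P1'] [IsScalarTower k Q' P0']
variable (d1 : P1 →ₗ[Q] P0) (d0 : P0 →ₗ[Q] P1)
variable (d1' : P1' →ₗ[Q'] P0') (d0' : P0' →ₗ[Q'] P1')

/-- The odd-to-even differential of the tensor product of two matrix factorizations, as a
`k`-linear map: in block form `[[d₁ ⊗ id, id ⊗ d₁'], [-id ⊗ d₀', d₀ ⊗ id]]`. -/
noncomputable def mfTensorD1 :
    (P1 ⊗[k] P0') × (P0 ⊗[k] P1') →ₗ[k] (P0 ⊗[k] P0') × (P1 ⊗[k] P1') :=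
  LinearMap.prod
    ((TensorProduct.map (d1.restrictScalars k) (LinearMap.id : P0' →ₗ[k] P0')) ∘ₗ
        LinearMap.fst k (P1 ⊗[k] P0') (P0 ⊗[k] P1') +
      (TensorProduct.map (LinearMap.id : P0 →ₗ[k] P0) (d1'.restrictScalars k)) ∘ₗ
        LinearMap.snd k (P1 ⊗[k] P0') (P0 ⊗[k] P1'))
    ((-(TensorProduct.map (LinearMap.id : P1 →ₗ[k] P1) (d0'.restrictScalars k))) ∘ₗ
        LinearMap.fst k (P1 ⊗[k] P0') (P0 ⊗[k] P1') +
      (TensorProduct.map (d0.restrictScalars k) (LinearMap.id : P1' →ₗ[k] P1')) ∘ₗ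
        LinearMap.snd k (P1 ⊗[k] P0') (P0 ⊗[k] P1'))

/-- The even-to-odd differential of the tensor product of two matrix factorizations, as a
`k`-linear map: in block form `[[d₀ ⊗ id, -id ⊗ d₁'], [id ⊗ d₀', d₁ ⊗ id]]`. -/
noncomputable def mfTensorD0 :
    (P0 ⊗[k] P0') × (P1 ⊗[k] P1') →ₗ[k] (P1 ⊗[k] P0') × (P0 ⊗[k] P1') :=
  LinearMap.prod
    ((TensorProduct.map (d0.restrictScalars k) (LinearMap.id : P0' →ₗ[k] P0')) ∘ₗ
        LinearMap.fst k (P0 ⊗[k] P0') (P1 ⊗[k] P1') +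
      (-(TensorProduct.map (LinearMap.id : P1 →ₗ[k] P1) (d1'.restrictScalars k))) ∘ₗ
        LinearMap.snd k (P0 ⊗[k] P0') (P1 ⊗[k] P1'))
    ((TensorProduct.map (LinearMap.id : P0 →ₗ[k] P0) (d0'.restrictScalars k)) ∘ₗ
        LinearMap.fst k (P0 ⊗[k] P0') (P1 ⊗[k] P1') +
      (TensorProduct.map (d1.restrictScalars k) (LinearMap.id : P1' →ₗ[k] P1')) ∘ₗ
        LinearMap.snd k (P0 ⊗[k] P0') (P1 ⊗[k] P1'))

theorem aux_sum {A M : Type u} [CommRing A] [AddCommGroup M] [Module A M] {n : ℕ}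
    (s : (Fin n → A) →ₗ[A] M) (v : Fin n → A) :
    ∑ p, v p • s (Pi.single p 1) = s v := by
  conv_rhs => rw [← (Pi.basisFun A (Fin n)).sum_repr v]
  simp [map_sum]

theorem aux_map_smul {k A B M N M' N' : Type u} [Field k] [CommRing A] [CommRing B]
    [Algebra k A] [Algebra k B]
    [AddCommGroup M] [AddCommGroup N] [AddCommGroup M'] [AddCommGroup N']
    [Module k M] [Module k N] [Module k M'] [Module k N']
    [Module A M] [Module A M'] [Module B N] [Module B N']
    [Module (A ⊗[k] B) (M ⊗[k] N)] [Module (A ⊗[k] B) (M' ⊗[k] N')]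
    (h : ∀ (a : A) (b : B) (m : M) (n : N),
      (a ⊗ₜ[k] b) • (m ⊗ₜ[k] n) = (a • m) ⊗ₜ[k] (b • n))
    (h' : ∀ (a : A) (b : B) (m : M') (n : N'),
      (a ⊗ₜ[k] b) • (m ⊗ₜ[k] n) = (a • m) ⊗ₜ[k] (b • n))
    (u : M →ₗ[k] M') (v : N →ₗ[k] N')
    (hu : ∀ (a : A) m, u (a • m) = a • u m) (hv : ∀ (b : B) n, v (b • n) = b • v n)
    (r : A ⊗[k] B) (x : M ⊗[k] N) :
    TensorProduct.map u v (r • x) = r • TensorProduct.map u v x := by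
  induction x using TensorProduct.induction_on with
  | zero => simp
  | add x y hx hy => simp only [smul_add, map_add, hx, hy]
  | tmul m n =>
    induction r using TensorProduct.induction_on with
    | zero => simp
    | add x y hx hy => simp only [add_smul, map_add, hx, hy]
    | tmul a b => simp [h, h', hu, hv]

theorem aux_fp {k A B M N : Type u} [Field k] [CommRing A] [CommRing B]
    [Algebra k A] [Algebra k B]
    [AddCommGroup M] [AddCommGroup N]
    [Module k M] [Module k N] [Module A M] [Module B N]
    [IsScalarTower k A M] [IsScalarTower k B N]
    [Module (A ⊗[k] B) (M ⊗[k] N)]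
    (h : ∀ (a : A) (b : B) (m : M) (n : N),
      (a ⊗ₜ[k] b) • (m ⊗ₜ[k] n) = (a • m) ⊗ₜ[k] (b • n))
    (h1 : Module.Finite A M) (h2 : Module.Projective A M)
    (h3 : Module.Finite B N) (h4 : Module.Projective B N) :
    Module.Finite (A ⊗[k] B) (M ⊗[k] N) ∧ Module.Projective (A ⊗[k] B) (M ⊗[k] N) := by
  obtain ⟨n, s, i, -, -, hsi⟩ := Module.Finite.exists_comp_eq_id_of_projective A M
  obtain ⟨m, t, j, -, -, htj⟩ := Module.Finite.exists_comp_eq_id_of_projective B N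
  let φ : M ⊗[k] N →ₗ[A ⊗[k] B] (Fin n × Fin m → A ⊗[k] B) :=
    { toFun := fun x pq => TensorProduct.map
        (((LinearMap.proj pq.1 : (Fin n → A) →ₗ[A] A) ∘ₗ i).restrictScalars k)
        (((LinearMap.proj pq.2 : (Fin m → B) →ₗ[B] B) ∘ₗ j).restrictScalars k) x
      map_add' := fun x y => by ext pq; simp
      map_smul' := fun r x => by
        ext pq
        exact aux_map_smul h (fun a b m n => by simp) _ _ (fun a m => by simp)
          (fun a m => by simp) r x }
  let ψ : (Fin n × Fin m → A ⊗[k] B) →ₗ[A ⊗[k] B] M ⊗[k] N :=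
    ∑ pq : Fin n × Fin m, (LinearMap.proj pq).smulRight
      (s (Pi.single pq.1 1) ⊗ₜ[k] t (Pi.single pq.2 1))
  have key : ψ ∘ₗ φ = LinearMap.id := by
    ext x
    induction x using TensorProduct.induction_on with
    | zero => simp
    | add x y hx hy => rw [map_add, hx, hy, map_add]
    | tmul x y =>
      have hx : ∑ p, i x p • s (Pi.single p 1) = x := by
        have e : s (i x) = x := LinearMap.congr_fun hsi x
        exact (aux_sum s (i x)).trans e
      have hy : ∑ p, j y p • t (Pi.single p 1) = y := by
        have e : t (j y) = y := LinearMap.congr_fun htj y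
        exact (aux_sum t (j y)).trans e
      simp only [ψ, φ, LinearMap.comp_apply, LinearMap.sum_apply, LinearMap.smulRight_apply,
        LinearMap.proj_apply, LinearMap.coe_mk, AddHom.coe_mk, TensorProduct.map_tmul,
        LinearMap.restrictScalars_apply, h, LinearMap.id_apply]
      conv_rhs => rw [← hx, ← hy]
      rw [TensorProduct.sum_tmul, Fintype.sum_prod_type]
      simp only [TensorProduct.tmul_sum]
  refine ⟨Module.Finite.of_surjective ψ fun x => ⟨φ x, LinearMap.congr_fun key x⟩,
    Module.Projective.of_split φ ψ key⟩

/-- **The tensor product of matrix factorizations.**  If `(P₁, P₀, d₁, d₀)` is a matrix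
factorization of `f` over `Q` and `(P₁', P₀', d₁', d₀')` is a matrix factorization of `f'`
over `Q'`, then `((P₁ ⊗ P₀') ⊕ (P₀ ⊗ P₁'), (P₀ ⊗ P₀') ⊕ (P₁ ⊗ P₁'))` with the block maps
`D₁`, `D₀` is a matrix factorization of `f ⊗ 1 + 1 ⊗ f'` over `Q ⊗[k] Q'`: the modules
are finitely generated projective, the maps are `Q ⊗[k] Q'`-linear, and they compose to
multiplication by `f ⊗ 1 + 1 ⊗ f'` both ways.  (Here the `Q ⊗[k] Q'`-module structures on
the tensor products are the canonical ones, characterized by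
`(a ⊗ b) • (m ⊗ n) = (a • m) ⊗ (b • n)`.) -/
theorem mfTensor_is_matrix_factorization
    (f : Q) (f' : Q')
    (hP1 : Module.Finite Q P1) (hP1p : Module.Projective Q P1)
    (hP0 : Module.Finite Q P0) (hP0p : Module.Projective Q P0)
    (hP1' : Module.Finite Q' P1') (hP1p' : Module.Projective Q' P1')
    (hP0' : Module.Finite Q' P0') (hP0p' : Module.Projective Q' P0')
    (h10 : d1 ∘ₗ d0 = f • LinearMap.id) (h01 : d0 ∘ₗ d1 = f • LinearMap.id)
    (h10' : d1' ∘ₗ d0' = f' • LinearMap.id) (h01' : d0' ∘ₗ d1' = f' • LinearMap.id)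
    [Module (Q ⊗[k] Q') (P1 ⊗[k] P0')] [Module (Q ⊗[k] Q') (P0 ⊗[k] P1')]
    [Module (Q ⊗[k] Q') (P0 ⊗[k] P0')] [Module (Q ⊗[k] Q') (P1 ⊗[k] P1')]
    (hsmul_a : ∀ (a : Q) (b : Q') (m : P1) (n : P0'),
      (a ⊗ₜ[k] b) • (m ⊗ₜ[k] n) = (a • m) ⊗ₜ[k] (b • n))
    (hsmul_b : ∀ (a : Q) (b : Q') (m : P0) (n : P1'),
      (a ⊗ₜ[k] b) • (m ⊗ₜ[k] n) = (a • m) ⊗ₜ[k] (b • n))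
    (hsmul_c : ∀ (a : Q) (b : Q') (m : P0) (n : P0'),
      (a ⊗ₜ[k] b) • (m ⊗ₜ[k] n) = (a • m) ⊗ₜ[k] (b • n))
    (hsmul_d : ∀ (a : Q) (b : Q') (m : P1) (n : P1'),
      (a ⊗ₜ[k] b) • (m ⊗ₜ[k] n) = (a • m) ⊗ₜ[k] (b • n)) :
    Module.Finite (Q ⊗[k] Q') ((P1 ⊗[k] P0') × (P0 ⊗[k] P1')) ∧
    Module.Projective (Q ⊗[k] Q') ((P1 ⊗[k] P0') × (P0 ⊗[k] P1')) ∧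
    Module.Finite (Q ⊗[k] Q') ((P0 ⊗[k] P0') × (P1 ⊗[k] P1')) ∧
    Module.Projective (Q ⊗[k] Q') ((P0 ⊗[k] P0') × (P1 ⊗[k] P1')) ∧
    (∀ (r : Q ⊗[k] Q') (x : (P1 ⊗[k] P0') × (P0 ⊗[k] P1')),
      mfTensorD1 k Q Q' P1 P0 P1' P0' d1 d0 d1' d0' (r • x) =
        r • mfTensorD1 k Q Q' P1 P0 P1' P0' d1 d0 d1' d0' x) ∧
    (∀ (r : Q ⊗[k] Q') (x : (P0 ⊗[k] P0') × (P1 ⊗[k] P1')),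
      mfTensorD0 k Q Q' P1 P0 P1' P0' d1 d0 d1' d0' (r • x) =
        r • mfTensorD0 k Q Q' P1 P0 P1' P0' d1 d0 d1' d0' x) ∧
    (∀ x : (P0 ⊗[k] P0') × (P1 ⊗[k] P1'),
      mfTensorD1 k Q Q' P1 P0 P1' P0' d1 d0 d1' d0'
          (mfTensorD0 k Q Q' P1 P0 P1' P0' d1 d0 d1' d0' x) =
        (f ⊗ₜ[k] (1 : Q') + (1 : Q) ⊗ₜ[k] f') • x) ∧
    (∀ x : (P1 ⊗[k] P0') × (P0 ⊗[k] P1'),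
      mfTensorD0 k Q Q' P1 P0 P1' P0' d1 d0 d1' d0'
          (mfTensorD1 k Q Q' P1 P0 P1' P0' d1 d0 d1' d0' x) =
        (f ⊗ₜ[k] (1 : Q') + (1 : Q) ⊗ₜ[k] f') • x) := by
  obtain ⟨fa, pa⟩ := aux_fp hsmul_a hP1 hP1p hP0' hP0p'
  obtain ⟨fb, pb⟩ := aux_fp hsmul_b hP0 hP0p hP1' hP1p'
  obtain ⟨fc, pc⟩ := aux_fp hsmul_c hP0 hP0p hP0' hP0p'
  obtain ⟨fd, pd⟩ := aux_fp hsmul_d hP1 hP1p hP1' hP1p'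
  have e10 : ∀ x, d1 (d0 x) = f • x := fun x => LinearMap.congr_fun h10 x
  have e01 : ∀ x, d0 (d1 x) = f • x := fun x => LinearMap.congr_fun h01 x
  have e10' : ∀ x, d1' (d0' x) = f' • x := fun x => LinearMap.congr_fun h10' x
  have e01' : ∀ x, d0' (d1' x) = f' • x := fun x => LinearMap.congr_fun h01' x
  refine ⟨inferInstance, inferInstance, inferInstance, inferInstance, ?_, ?_, ?_, ?_⟩
  · rintro r ⟨x, y⟩
    have l1 := aux_map_smul hsmul_a hsmul_c (d1.restrictScalars k) LinearMap.id
      (by simp) (by simp) r x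
    have l2 := aux_map_smul hsmul_b hsmul_c LinearMap.id (d1'.restrictScalars k)
      (by simp) (by simp) r y
    have l3 := aux_map_smul hsmul_a hsmul_d LinearMap.id (d0'.restrictScalars k)
      (by simp) (by simp) r x
    have l4 := aux_map_smul hsmul_b hsmul_d (d0.restrictScalars k) LinearMap.id
      (by simp) (by simp) r y
    simp [mfTensorD1, l1, l2, l3, l4, smul_add, smul_neg]
  · rintro r ⟨x, y⟩
    have l1 := aux_map_smul hsmul_c hsmul_a (d0.restrictScalars k) LinearMap.id
      (by simp) (by simp) r x
    have l2 := aux_map_smul hsmul_d hsmul_a LinearMap.id (d1'.restrictScalars k)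
      (by simp) (by simp) r y
    have l3 := aux_map_smul hsmul_c hsmul_b LinearMap.id (d0'.restrictScalars k)
      (by simp) (by simp) r x
    have l4 := aux_map_smul hsmul_d hsmul_b (d1.restrictScalars k) LinearMap.id
      (by simp) (by simp) r y
    simp [mfTensorD0, l1, l2, l3, l4, smul_add, smul_neg]
  · rintro ⟨x, y⟩
    have hx : mfTensorD1 k Q Q' P1 P0 P1' P0' d1 d0 d1' d0'
          (mfTensorD0 k Q Q' P1 P0 P1' P0' d1 d0 d1' d0' (x, 0)) =
        (f ⊗ₜ[k] (1 : Q') + (1 : Q) ⊗ₜ[k] f') • (x, 0) := by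
      induction x using TensorProduct.induction_on with
      | zero => simp [← Prod.zero_eq_mk]
      | add x y hx hy =>
        rw [← add_zero (0 : P1 ⊗[k] P1'), ← Prod.mk_add_mk, map_add, map_add, hx, hy, smul_add]
      | tmul m n => simp [mfTensorD1, mfTensorD0, e10, e10', e01, e01', hsmul_c, add_smul]
    have hy : mfTensorD1 k Q Q' P1 P0 P1' P0' d1 d0 d1' d0'
          (mfTensorD0 k Q Q' P1 P0 P1' P0' d1 d0 d1' d0' (0, y)) =
        (f ⊗ₜ[k] (1 : Q') + (1 : Q) ⊗ₜ[k] f') • (0, y) := by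
      induction y using TensorProduct.induction_on with
      | zero => simp [← Prod.zero_eq_mk]
      | add x y hx hy =>
        rw [← add_zero (0 : P0 ⊗[k] P0'), ← Prod.mk_add_mk, map_add, map_add, hx, hy, smul_add]
      | tmul m n => simp [mfTensorD1, mfTensorD0, e10, e10', e01, e01', hsmul_d, add_smul, add_comm]
    have : (x, y) = (x, 0) + (0, y) := by simp
    rw [this, map_add, map_add, hx, hy, smul_add]
  · rintro ⟨x, y⟩
    have hx : mfTensorD0 k Q Q' P1 P0 P1' P0' d1 d0 d1' d0'
          (mfTensorD1 k Q Q' P1 P0 P1' P0' d1 d0 d1' d0' (x, 0)) =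
        (f ⊗ₜ[k] (1 : Q') + (1 : Q) ⊗ₜ[k] f') • (x, 0) := by
      induction x using TensorProduct.induction_on with
      | zero => simp [← Prod.zero_eq_mk]
      | add x y hx hy =>
        rw [← add_zero (0 : P0 ⊗[k] P1'), ← Prod.mk_add_mk, map_add, map_add, hx, hy, smul_add]
      | tmul m n => simp [mfTensorD1, mfTensorD0, e10, e10', e01, e01', hsmul_a, add_smul]
    have hy : mfTensorD0 k Q Q' P1 P0 P1' P0' d1 d0 d1' d0'
          (mfTensorD1 k Q Q' P1 P0 P1' P0' d1 d0 d1' d0' (0, y)) =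
        (f ⊗ₜ[k] (1 : Q') + (1 : Q) ⊗ₜ[k] f') • (0, y) := by
      induction y using TensorProduct.induction_on with
      | zero => simp [← Prod.zero_eq_mk]
      | add x y hx hy =>
        rw [← add_zero (0 : P1 ⊗[k] P0'), ← Prod.mk_add_mk, map_add, map_add, hx, hy, smul_add]
      | tmul m n => simp [mfTensorD1, mfTensorD0, e10, e10', e01, e01', hsmul_b, add_smul, add_comm]
    have : (x, y) = (x, 0) + (0, y) := by simp
    rw [this, map_add, map_add, hx, hy, smul_add]

end
end
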